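/- Let f : Q0 = [0,1]^n → ℝ be integrable with finite dyadic BMO seminorm ‖f‖_{*,D}, and let f_d be its nonincreasing rearrangement on (0,1]. Then f_d belongs to BMO((0,1]) and ‖f_d‖_* ≤ 2^n ‖f‖_{*,D}; that is, for every subinterval J ⊆ (0,1] with |J| > 0, (1/|J|)∫_J |f_d(u) − (f_d)_J| du ≤ 2^n ‖f‖_{*,D}. -/

import Mathlib

open MeasureTheory Set Real

noncomputable section

/-- The unit cube `Q₀ = [0,1]ⁿ` in `ℝⁿ`. -/
def Q0 (n : ℕ) : Set (Fin n → ℝ) := Set.Icc 0 1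

/-- The integral average `f_Q = (1/|Q|) ∫_Q f` of `f` over `Q`. -/
def avgOn {n : ℕ} (f : (Fin n → ℝ) → ℝ) (Q : Set (Fin n → ℝ)) : ℝ :=
  (volume Q).toReal⁻¹ * ∫ x in Q, f x

/-- The mean oscillation `Ω(f,Q) = (1/|Q|) ∫_Q |f - f_Q|` of `f` over `Q`. -/
def oscOn {n : ℕ} (f : (Fin n → ℝ) → ℝ) (Q : Set (Fin n → ℝ)) : ℝ :=
  (volume Q).toReal⁻¹ * ∫ x in Q, |f x - avgOn f Q|

/-- `Q` is a dyadic subcube of `[0,1]ⁿ` of side length `2⁻ᵏ`,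
i.e. `Q = ∏ᵢ [mᵢ 2⁻ᵏ, (mᵢ+1) 2⁻ᵏ]` with `0 ≤ mᵢ < 2ᵏ`. -/
def IsDyadicSide (n k : ℕ) (Q : Set (Fin n → ℝ)) : Prop :=
  ∃ m : Fin n → ℕ, (∀ i, m i < 2 ^ k) ∧
    Q = Set.Icc (fun i => (m i : ℝ) / 2 ^ k) (fun i => ((m i : ℝ) + 1) / 2 ^ k)

/-- `Q` belongs to the family `𝒟` of dyadic subcubes of `[0,1]ⁿ`. -/
def IsDyadic (n : ℕ) (Q : Set (Fin n → ℝ)) : Prop := ∃ k, IsDyadicSide n k Q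

/-- One-dimensional integral average `g_J` over a set `J ⊆ ℝ`. -/
def avgI (g : ℝ → ℝ) (J : Set ℝ) : ℝ := (volume J).toReal⁻¹ * ∫ u in J, g u

/-- One-dimensional mean oscillation `Ω(g,J)` over a set `J ⊆ ℝ`. -/
def oscI (g : ℝ → ℝ) (J : Set ℝ) : ℝ :=
  (volume J).toReal⁻¹ * ∫ u in J, |g u - avgI g J|

/-- `g : (0,1] → ℝ` is the nonincreasing, left-continuous rearrangement of
`f : [0,1]ⁿ → ℝ`, i.e. it is nonincreasing, left continuous and equimeasurable with `f`. -/
def IsRearrangement {n : ℕ} (f : (Fin n → ℝ) → ℝ) (g : ℝ → ℝ) : Prop :=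
  AntitoneOn g (Set.Ioc 0 1) ∧
  (∀ t ∈ Set.Ioc (0:ℝ) 1, ContinuousWithinAt g (Set.Iio t) t) ∧
  ∀ lam : ℝ, volume {t ∈ Set.Ioc (0:ℝ) 1 | lam < g t} = volume {x ∈ Q0 n | lam < f x}

/-- The Hardy average `F(t) = (1/t) ∫_0^t g(u) du`. -/
def hardyAvg (g : ℝ → ℝ) (t : ℝ) : ℝ := t⁻¹ * ∫ u in Set.Ioc (0:ℝ) t, g u

/-- The Gurov–Reshetnyak modulus
`v(f;σ) = sup { Ω(f,Q)/f_Q : Q ∈ 𝒟, ℓ(Q) ≤ σ, f_Q > 0 }` (equal to `0` if no such `Q` exists,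
by the convention `sSup ∅ = 0` in `ℝ`). -/
def vGR {n : ℕ} (f : (Fin n → ℝ) → ℝ) (σ : ℝ) : ℝ :=
  sSup {r : ℝ | ∃ k Q, IsDyadicSide n k Q ∧ ((2:ℝ) ^ k)⁻¹ ≤ σ ∧
    0 < avgOn f Q ∧ r = oscOn f Q / avgOn f Q}

/-- `f` satisfies the dyadic Gurov–Reshetnyak condition `f ∈ GR_𝒟(Q₀,ε)`:
`f : Q₀ → [0,∞)` is integrable and `Ω(f,Q) ≤ ε f_Q` for every dyadic cube `Q`. -/
def GRcond {n : ℕ} (f : (Fin n → ℝ) → ℝ) (ε : ℝ) : Prop :=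
  IntegrableOn f (Q0 n) ∧ (∀ x ∈ Q0 n, 0 ≤ f x) ∧
    ∀ Q, IsDyadic n Q → oscOn f Q ≤ ε * avgOn f Q

/-!
Let `J ⊆ (0, 1]` be an interval, `α` the average of `f_d` over `J`, and suppose that the average of
`f` is at most `α`; otherwise replace `f` by `-f`, whose rearrangement is `t ↦ -f_d (1 - t)`. Stop
at the first dyadic cubes `P` having a child with average `> α`, and choose one such child `C` in
each. Since `f_P ≤ α`, `∫_P (f - α)⁺ ≤ ½ M |P| = 2ⁿ⁻¹ M |C|`, while `f ≤ α` a.e. off the cubes `P`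
by Lebesgue differentiation. Hence the union `E` of the cubes `C` satisfies
`∫ (f - α)⁺ ≤ 2ⁿ⁻¹ M |E|` and `∫_E f ≥ α |E|`, so that the concave function
`φ x = ∫₀ˣ (f_d - α)` is nonnegative at `|E|`.
It also vanishes at `0` and takes equal values at the endpoints of `J`, and concavity then gives
`|E| ∫_J (f_d - α)⁺ ≤ |J| ∫ (f - α)⁺ ≤ 2ⁿ⁻¹ M |J| |E|`, half of the claim.

Of the dyadic cubes this uses only that they form nested partitions whose cells are at most `2ⁿ`
times as large as their children and along which averages of `f` converge a.e. to `f`.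
-/

open Filter Topology ProbabilityTheory NNReal

section Concave

variable {φ : ℝ → ℝ} {s : Set ℝ} {x y z : ℝ}

lemma chord_le_of_concaveOn (hφ : ConcaveOn ℝ s φ) (hx : x ∈ s) (hz : z ∈ s) (hxy : x ≤ y)
    (hyz : y ≤ z) : (z - y) * φ x + (y - x) * φ z ≤ (z - x) * φ y := by
  rcases (hxy.trans hyz).eq_or_lt with rfl | hxz
  · obtain rfl := le_antisymm hxy hyz
    simp
  have hpos : 0 < z - x := sub_pos.2 hxz
  have hchord := hφ.2 hx hz (div_nonneg (sub_nonneg.2 hyz) hpos.le)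
    (div_nonneg (sub_nonneg.2 hxy) hpos.le) (by field_simp; ring)
  have hcomb : (z - y) / (z - x) * x + (y - x) / (z - x) * z = y := by field_simp; ring
  simp only [smul_eq_mul, hcomb] at hchord
  calc (z - y) * φ x + (y - x) * φ z
      = (z - x) * ((z - y) / (z - x) * φ x + (y - x) / (z - x) * φ z) := by field_simp
    _ ≤ (z - x) * φ y := mul_le_mul_of_nonneg_left hchord hpos.le

lemma mul_sub_le_of_concaveOn {p r a b c : ℝ} (hφ : ConcaveOn ℝ s φ) (hp : p ∈ s) (hr : r ∈ s)
    (hφp : 0 ≤ φ p) (hφr : 0 ≤ φ r) (hpa : p ≤ a) (hac : a ≤ c) (hcb : c ≤ b) (hbr : b ≤ r)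
    (hφab : φ a = φ b) : (r - p) * (φ c - φ a) ≤ (b - a) * φ c := by
  have hc : c ∈ s := hφ.1.ordConnected.out hp hr ⟨hpa.trans hac, hcb.trans hbr⟩
  have hleft := chord_le_of_concaveOn hφ hp hc hpa hac
  have hright := chord_le_of_concaveOn hφ hc hr hcb hbr
  have hφp' := mul_nonneg (sub_nonneg.2 hac) hφp
  have hφr' := mul_nonneg (sub_nonneg.2 hcb) hφr
  rw [← hφab] at hright
  linarith

end Concave

section Antitone

variable {h : ℝ → ℝ} {p q a b r : ℝ}

lemma intervalIntegrable_of_integrableOn_Ioo {x y : ℝ} (hi : IntegrableOn h (Ioo p q))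
    (hx : p ≤ x) (hxy : x ≤ y) (hy : y ≤ q) : IntervalIntegrable h volume x y :=
  (intervalIntegrable_iff_integrableOn_Ioo_of_le hxy).2 (hi.mono_set (Ioo_subset_Ioo hx hy))

lemma concaveOn_integral_of_antitoneOn (hi : IntegrableOn h (Ioo p q))
    (ha : AntitoneOn h (Ioo p q)) : ConcaveOn ℝ (Icc p q) fun x => ∫ t in p..x, h t := by
  refine concaveOn_of_slope_anti_adjacent (convex_Icc p q) fun {x y z} hx hz hxy hyz => ?_
  have hy : y ∈ Ioo p q := ⟨hx.1.trans_lt hxy, hyz.trans_le hz.2⟩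
  have hix := intervalIntegrable_of_integrableOn_Ioo hi le_rfl hx.1 hx.2
  have hiy := intervalIntegrable_of_integrableOn_Ioo hi le_rfl hy.1.le hy.2.le
  have hiz := intervalIntegrable_of_integrableOn_Ioo hi le_rfl hz.1 hz.2
  rw [intervalIntegral.integral_interval_sub_left hiz hiy,
    intervalIntegral.integral_interval_sub_left hiy hix]
  have hle_right : ∫ t in y..z, h t ≤ h y * (z - y) := by
    have := intervalIntegral.integral_mono_on_of_le_Ioo hyz.le
      (intervalIntegrable_of_integrableOn_Ioo hi hy.1.le hyz.le hz.2) intervalIntegrable_const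
      fun t ht => ha hy ⟨hy.1.trans ht.1, ht.2.trans_le hz.2⟩ ht.1.le
    simpa [mul_comm] using this
  have hle_left : h y * (y - x) ≤ ∫ t in x..y, h t := by
    have := intervalIntegral.integral_mono_on_of_le_Ioo hxy.le intervalIntegrable_const
      (intervalIntegrable_of_integrableOn_Ioo hi hx.1 hxy.le hy.2.le)
      fun t ht => ha ⟨hx.1.trans_lt ht.1, ht.2.trans hy.2⟩ hy ht.2.le
    simpa [mul_comm] using this
  exact ((div_le_iff₀ (sub_pos.2 hyz)).2 hle_right).trans
    ((le_div_iff₀ (sub_pos.2 hxy)).2 hle_left)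

lemma exists_sign_change_of_antitoneOn (hab : a ≤ b) (ha : AntitoneOn h (Ioo a b)) :
    ∃ c ∈ Icc a b, (∀ t ∈ Ioo a c, 0 ≤ h t) ∧ ∀ t ∈ Ioo c b, h t ≤ 0 := by
  let S := insert a {t ∈ Ioo a b | 0 ≤ h t}
  have hSb : b ∈ upperBounds S := by
    rintro t (rfl | ht)
    exacts [hab, ht.1.2.le]
  have haS : a ∈ S := mem_insert a _
  refine ⟨sSup S, ⟨le_csSup ⟨b, hSb⟩ haS, csSup_le ⟨a, haS⟩ hSb⟩, fun t ht => ?_, fun t ht => ?_⟩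
  · obtain ⟨u, hu, htu⟩ := exists_lt_of_lt_csSup ⟨a, haS⟩ ht.2
    rcases hu with rfl | hu
    · exact absurd ht.1 htu.not_gt
    · exact hu.2.trans (ha ⟨ht.1, htu.trans hu.1.2⟩ hu.1 htu.le)
  · by_contra! hpos
    have hat : a < t := (le_csSup ⟨b, hSb⟩ haS).trans_lt ht.1
    exact ht.1.not_ge (le_csSup ⟨b, hSb⟩ (mem_insert_of_mem a ⟨⟨hat, ht.2⟩, hpos.le⟩))

lemma integral_posPart_eq_of_sign_change {c : ℝ} (hi : IntegrableOn h (Ioo a b))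
    (hac : a ≤ c) (hcb : c ≤ b) (hpos : ∀ t ∈ Ioo a c, 0 ≤ h t) (hneg : ∀ t ∈ Ioo c b, h t ≤ 0) :
    ∫ t in a..b, (h t)⁺ = ∫ t in a..c, h t := by
  have hip : IntegrableOn (fun t => (h t)⁺) (Ioo a b) := hi.pos_part
  have hleft : ∫ t in a..c, (h t)⁺ = ∫ t in a..c, h t :=
    intervalIntegral.integral_congr_Ioo_of_le hac fun t ht => posPart_of_nonneg (hpos t ht)
  have hright : ∫ t in c..b, (h t)⁺ = ∫ _ in c..b, (0 : ℝ) :=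
    intervalIntegral.integral_congr_Ioo_of_le hcb fun t ht => posPart_of_nonpos (hneg t ht)
  rw [← intervalIntegral.integral_add_adjacent_intervals
    (intervalIntegrable_of_integrableOn_Ioo hip le_rfl hac hcb)
    (intervalIntegrable_of_integrableOn_Ioo hip hac hcb le_rfl), hleft, hright,
    intervalIntegral.integral_zero, add_zero]

lemma integral_le_integral_posPart {c : ℝ} (hi : IntegrableOn h (Ioo p q)) (hpc : p ≤ c)
    (hcq : c ≤ q) : ∫ t in p..c, h t ≤ ∫ t in p..q, (h t)⁺ := by
  have hip : IntegrableOn (fun t => (h t)⁺) (Ioo p q) := hi.pos_part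
  calc ∫ t in p..c, h t
      ≤ ∫ t in p..c, (h t)⁺ :=
        intervalIntegral.integral_mono_on hpc
          (intervalIntegrable_of_integrableOn_Ioo hi le_rfl hpc hcq)
          (intervalIntegrable_of_integrableOn_Ioo hip le_rfl hpc hcq) fun t _ => le_posPart (h t)
    _ ≤ ∫ t in p..q, (h t)⁺ :=
        intervalIntegral.integral_mono_interval le_rfl hpc hcq
          (Eventually.of_forall fun t => posPart_nonneg (h t))
          (intervalIntegrable_of_integrableOn_Ioo hip le_rfl (hpc.trans hcq) le_rfl)

lemma integral_nonneg_of_antitoneOn_of_integral_eq_zero (hi : IntegrableOn h (Ioo p b))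
    (ha : AntitoneOn h (Ioo p b)) (hpa : p ≤ a) (hab : a < b) (hzero : ∫ t in a..b, h t = 0) :
    0 ≤ ∫ t in p..b, h t := by
  have hchord := chord_le_of_concaveOn (concaveOn_integral_of_antitoneOn hi ha)
    (left_mem_Icc.2 (hpa.trans hab.le)) (right_mem_Icc.2 (hpa.trans hab.le)) hpa hab.le
  have hpb : ∫ t in p..b, h t = ∫ t in p..a, h t := by
    rw [← intervalIntegral.integral_add_adjacent_intervals
      (intervalIntegrable_of_integrableOn_Ioo hi le_rfl hpa hab.le)
      (intervalIntegrable_of_integrableOn_Ioo hi hpa hab.le le_rfl), hzero, add_zero]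
  simp only [intervalIntegral.integral_same, ← hpb] at hchord
  exact nonneg_of_mul_nonneg_right (by linarith : 0 ≤ (b - a) * ∫ t in p..b, h t) (sub_pos.2 hab)

/- Equivalently, for the concave primitive `φ` of `h` and its maximum point `c` on `[a, b]`,
`(r - p) (φ c - φ a) ≤ (b - a) φ c`. Replacing `r` by `max r b` reduces this to `b ≤ r`. -/
lemma mul_integral_posPart_le_of_antitoneOn (hi : IntegrableOn h (Ioo p q))
    (ha : AntitoneOn h (Ioo p q)) (hpa : p ≤ a) (hab : a < b) (hbq : b ≤ q)
    (hzero : ∫ t in a..b, h t = 0) (hpr : p ≤ r) (hrq : r ≤ q) (hr : 0 ≤ ∫ t in p..r, h t) :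
    (r - p) * ∫ t in a..b, (h t)⁺ ≤ (b - a) * ∫ t in p..q, (h t)⁺ := by
  let φ : ℝ → ℝ := fun x => ∫ t in p..x, h t
  have hφsub {x y : ℝ} (hx : p ≤ x) (hxy : x ≤ y) (hy : y ≤ q) : φ y - φ x = ∫ t in x..y, h t :=
    intervalIntegral.integral_interval_sub_left
      (intervalIntegrable_of_integrableOn_Ioo hi le_rfl (hx.trans hxy) hy)
      (intervalIntegrable_of_integrableOn_Ioo hi le_rfl hx (hxy.trans hy))
  have hφab : φ a = φ b := (sub_eq_zero.1 ((hφsub hpa hab.le hbq).trans hzero)).symm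
  have hφb : 0 ≤ φ b := integral_nonneg_of_antitoneOn_of_integral_eq_zero
    (hi.mono_set (Ioo_subset_Ioo_right hbq)) (ha.mono (Ioo_subset_Ioo_right hbq)) hpa hab hzero
  have hφmax : 0 ≤ φ (max r b) := by
    rcases max_choice r b with hm | hm <;> rw [hm] <;> assumption
  obtain ⟨c, ⟨hac, hcb⟩, hpos, hneg⟩ :=
    exists_sign_change_of_antitoneOn hab.le (ha.mono (Ioo_subset_Ioo hpa hbq))
  have hposPart : ∫ t in a..b, (h t)⁺ = φ c - φ a := by
    rw [hφsub hpa hac (hcb.trans hbq), integral_posPart_eq_of_sign_change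
      (hi.mono_set (Ioo_subset_Ioo hpa hbq)) hac hcb hpos hneg]
  have hnonneg : 0 ≤ ∫ t in a..b, (h t)⁺ :=
    intervalIntegral.integral_nonneg hab.le fun t _ => posPart_nonneg (h t)
  calc (r - p) * ∫ t in a..b, (h t)⁺
      ≤ (max r b - p) * ∫ t in a..b, (h t)⁺ :=
        mul_le_mul_of_nonneg_right (sub_le_sub_right (le_max_left r b) p) hnonneg
    _ ≤ (b - a) * φ c := by
        rw [hposPart]
        exact mul_sub_le_of_concaveOn (concaveOn_integral_of_antitoneOn hi ha)
          (left_mem_Icc.2 (hpr.trans hrq)) ⟨hpr.trans (le_max_left r b), max_le hrq hbq⟩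
          intervalIntegral.integral_same.ge hφmax hpa hac hcb (le_max_right r b) hφab
    _ ≤ (b - a) * ∫ t in p..q, (h t)⁺ :=
        mul_le_mul_of_nonneg_left (integral_le_integral_posPart hi (hpa.trans hac) (hcb.trans hbq))
          (sub_nonneg.2 hab.le)

end Antitone


section MeanOscillation

variable {X : Type*} [MeasurableSpace X] {μ : Measure X} {f : X → ℝ} {s : Set X} {α : ℝ}

/-- The mean oscillation of `f` over `s`: the average distance of `f` to its average, which
specializes to both `oscOn` and `oscI`. As for averages, it is `0` when `s` has measure `0`
or `∞`. -/
def meanOsc (μ : Measure X) (f : X → ℝ) (s : Set X) : ℝ :=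
  ⨍ x in s, |f x - ⨍ y in s, f y ∂μ| ∂μ

lemma avgOn_eq_setAverage {n : ℕ} (f : (Fin n → ℝ) → ℝ) (Q : Set (Fin n → ℝ)) :
    avgOn f Q = ⨍ x in Q, f x := by
  rw [setAverage_eq, smul_eq_mul]; rfl

lemma oscOn_eq_meanOsc {n : ℕ} (f : (Fin n → ℝ) → ℝ) (Q : Set (Fin n → ℝ)) :
    oscOn f Q = meanOsc volume f Q := by
  rw [meanOsc, setAverage_eq, smul_eq_mul, ← avgOn_eq_setAverage]; rfl

lemma oscI_eq_meanOsc (g : ℝ → ℝ) (J : Set ℝ) : oscI g J = meanOsc volume g J := by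
  rw [meanOsc, setAverage_eq, setAverage_eq, smul_eq_mul, smul_eq_mul]; rfl

lemma meanOsc_nonneg : 0 ≤ meanOsc μ f s := by
  rw [meanOsc, setAverage_eq]
  exact smul_nonneg (by positivity) (integral_nonneg fun _ => abs_nonneg _)

lemma meanOsc_neg : meanOsc μ (-f) s = meanOsc μ f s := by
  have habs (x : X) : |(-f) x - ⨍ y in s, (-f) y ∂μ| = |f x - ⨍ y in s, f y ∂μ| := by
    simp only [Pi.neg_apply, average_neg, neg_sub_neg, abs_sub_comm]
  simp only [meanOsc, habs]

lemma mul_measureReal_le_setIntegral_of_le_setAverage (hs : μ s ≠ ⊤) (hα : α ≤ ⨍ x in s, f x ∂μ) :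
    α * μ.real s ≤ ∫ x in s, f x ∂μ := by
  rw [← measure_smul_setAverage f hs, smul_eq_mul, mul_comm]
  exact mul_le_mul_of_nonneg_left hα measureReal_nonneg

lemma meanOsc_mul_measureReal (hs : μ s ≠ ⊤) (hf : IntegrableOn f s μ) :
    meanOsc μ f s * μ.real s = 2 * ∫ x in s, (f x - ⨍ y in s, f y ∂μ)⁺ ∂μ := by
  have : IsFiniteMeasure (μ.restrict s) := isFiniteMeasure_restrict.2 hs
  have hsub : Integrable (fun x => f x - ⨍ y in s, f y ∂μ) (μ.restrict s) :=
    hf.sub (integrable_const _)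
  rw [meanOsc, mul_comm, ← smul_eq_mul, measure_smul_setAverage _ hs,
    integral_abs_eq_two_mul_integral_posPart_sub_integral hsub, setAverage_sub_setAverage hs,
    sub_zero]

lemma setIntegral_posPart_sub_le_of_setAverage_le (hs : μ s ≠ ⊤) (hf : IntegrableOn f s μ)
    (hα : ⨍ x in s, f x ∂μ ≤ α) :
    ∫ x in s, (f x - α)⁺ ∂μ ≤ meanOsc μ f s / 2 * μ.real s := by
  have : IsFiniteMeasure (μ.restrict s) := isFiniteMeasure_restrict.2 hs
  calc ∫ x in s, (f x - α)⁺ ∂μ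
      ≤ ∫ x in s, (f x - ⨍ y in s, f y ∂μ)⁺ ∂μ :=
        integral_mono (hf.sub (integrable_const α)).pos_part (hf.sub (integrable_const _)).pos_part
          fun x => posPart_mono (sub_le_sub_left hα (f x))
    _ = meanOsc μ f s / 2 * μ.real s := by linarith [meanOsc_mul_measureReal hs hf]

lemma setAverage_Ioc_comp_sub_left (g : ℝ → ℝ) {a b : ℝ} (T : ℝ) (hab : a ≤ b) :
    ⨍ t in Ioc (T - b) (T - a), g (T - t) = ⨍ t in Ioc a b, g t := by
  have hab' : T - b ≤ T - a := sub_le_sub_left hab T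
  rw [setAverage_eq, setAverage_eq, ← intervalIntegral.integral_of_le hab,
    ← intervalIntegral.integral_of_le hab', intervalIntegral.integral_comp_sub_left,
    Real.volume_real_Ioc_of_le hab, Real.volume_real_Ioc_of_le hab']
  simp only [sub_sub_cancel, sub_sub_sub_cancel_left]

lemma meanOsc_Ioc_comp_sub_left (g : ℝ → ℝ) {a b : ℝ} (T : ℝ) (hab : a ≤ b) :
    meanOsc volume (fun t => g (T - t)) (Ioc (T - b) (T - a)) = meanOsc volume g (Ioc a b) := by
  rw [meanOsc, setAverage_Ioc_comp_sub_left g T hab]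
  exact setAverage_Ioc_comp_sub_left (fun t => |g t - ⨍ u in Ioc a b, g u|) T hab

end MeanOscillation

section Rearrangement

variable {X : Type*} [MeasurableSpace X] {μ : Measure X} {f : X → ℝ} {g : ℝ → ℝ} {T : ℝ}
  {E : Set X}

lemma measure_univ_eq_of_identDistrib
    (hid : IdentDistrib f g μ (volume.restrict (Ioo 0 T))) : μ univ = ENNReal.ofReal T := by
  simpa using hid.measure_mem_eq MeasurableSet.univ

lemma identDistrib_neg_comp_sub_left (hid : IdentDistrib f g μ (volume.restrict (Ioo 0 T))) :
    IdentDistrib (-f) (fun t => -g (T - t)) μ (volume.restrict (Ioo 0 T)) := by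
  have hrefl : MeasurePreserving (fun t => T - t) (volume.restrict (Ioo 0 T))
      (volume.restrict (Ioo 0 T)) := by
    simpa using (volume.measurePreserving_sub_left T).restrict_preimage (s := Ioo 0 T)
      measurableSet_Ioo
  have hg : AEMeasurable g ((volume.restrict (Ioo 0 T)).map fun t => T - t) :=
    hrefl.map_eq.symm ▸ hid.aemeasurable_snd
  have hcomp : IdentDistrib g (fun t => g (T - t)) (volume.restrict (Ioo 0 T))
      (volume.restrict (Ioo 0 T)) :=
    ⟨hid.aemeasurable_snd, hg.comp_measurable hrefl.measurable, by
      rw [← Function.comp_def g, ← AEMeasurable.map_map_of_aemeasurable hg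
        hrefl.measurable.aemeasurable, hrefl.map_eq]⟩
  exact (hid.trans hcomp).comp measurable_neg

lemma antitoneOn_neg_comp_sub_left (hg : AntitoneOn g (Ioo 0 T)) :
    AntitoneOn (fun t => -g (T - t)) (Ioo 0 T) := fun _ hx _ hy hxy =>
  neg_le_neg (hg ⟨sub_pos.2 hy.2, sub_lt_self T hy.1⟩ ⟨sub_pos.2 hx.2, sub_lt_self T hx.1⟩
    (sub_le_sub_left hxy T))

lemma setIntegral_le_mul_add_integral_posPart_sub [IsFiniteMeasure μ] (hf : Integrable f μ)
    (c : ℝ) : ∫ x in E, f x ∂μ ≤ c * μ.real E + ∫ x, (f x - c)⁺ ∂μ := by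
  have hfc : Integrable (fun x => f x - c) μ := hf.sub (integrable_const c)
  have hsplit : ∫ x in E, (f x - c) ∂μ = ∫ x in E, f x ∂μ - c * μ.real E := by
    rw [integral_sub hf.integrableOn (integrable_const c), setIntegral_const, smul_eq_mul,
      mul_comm]
  have hle : ∫ x in E, (f x - c) ∂μ ≤ ∫ x, (f x - c)⁺ ∂μ :=
    (integral_mono hfc.integrableOn hfc.pos_part.integrableOn fun x => le_posPart _).trans
      (setIntegral_le_integral hfc.pos_part (Eventually.of_forall fun x => posPart_nonneg _))
  linarith

lemma integral_posPart_sub_eq_of_identDistrib (hT : 0 ≤ T)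
    (hid : IdentDistrib f g μ (volume.restrict (Ioo 0 T))) (c : ℝ) :
    ∫ x, (f x - c)⁺ ∂μ = ∫ t in 0..T, (g t - c)⁺ := by
  rw [intervalIntegral.integral_of_le hT, integral_Ioc_eq_integral_Ioo]
  exact (hid.comp (u := fun s : ℝ => (s - c)⁺) (by fun_prop)).integral_eq

lemma measureReal_le_of_identDistrib (hT : 0 ≤ T)
    (hid : IdentDistrib f g μ (volume.restrict (Ioo 0 T))) : μ.real E ≤ T :=
  ENNReal.toReal_le_of_le_ofReal hT
    ((measure_mono (subset_univ E)).trans_eq (measure_univ_eq_of_identDistrib hid))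

lemma setIntegral_le_integral_of_identDistrib (hT : 0 ≤ T) (hf : Integrable f μ)
    (hid : IdentDistrib f g μ (volume.restrict (Ioo 0 T))) (hg : AntitoneOn g (Ioo 0 T))
    (hE : MeasurableSet E) :
    ∫ x in E, f x ∂μ ≤ ∫ t in 0..μ.real E, g t := by
  have huniv : μ univ = ENNReal.ofReal T := measure_univ_eq_of_identDistrib hid
  have : IsFiniteMeasure μ := ⟨huniv ▸ ENNReal.ofReal_lt_top⟩
  obtain ⟨r, hr⟩ : ∃ r, r = μ.real E := ⟨_, rfl⟩
  rw [← hr]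
  rcases (hr ▸ measureReal_nonneg : 0 ≤ r).eq_or_lt with rfl | hr0
  · rw [setIntegral_measure_zero f ((measureReal_eq_zero_iff).1 hr.symm),
      intervalIntegral.integral_same]
  rcases (hr.trans_le (measureReal_le_of_identDistrib hT hid)).eq_or_lt with rfl | hrT
  · have hconull : ∀ᵐ x ∂μ, x ∈ E := by
      rw [ae_mem_iff_measure_eq hE.nullMeasurableSet, huniv, hr, ofReal_measureReal]
    rw [Measure.restrict_eq_self_of_ae_mem hconull, intervalIntegral.integral_of_le hT,
      integral_Ioc_eq_integral_Ioo, hid.integral_eq]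
  have hgi : IntegrableOn (fun t => g t - g r) (Ioo 0 T) :=
    (hid.integrable_snd hf).sub (integrable_const (g r))
  have hposPart : ∫ t in 0..T, (g t - g r)⁺ = ∫ t in 0..r, (g t - g r) :=
    integral_posPart_eq_of_sign_change hgi hr0.le hrT.le
      (fun t ht => sub_nonneg.2 (hg ⟨ht.1, ht.2.trans hrT⟩ ⟨hr0, hrT⟩ ht.2.le))
      (fun t ht => sub_nonpos.2 (hg ⟨hr0, hrT⟩ ⟨hr0.trans ht.1, ht.2⟩ ht.1.le))
  calc ∫ x in E, f x ∂μ
      ≤ g r * r + ∫ x, (f x - g r)⁺ ∂μ := by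
        simpa only [← hr] using setIntegral_le_mul_add_integral_posPart_sub hf (g r) (E := E)
    _ = g r * r + ∫ t in 0..r, (g t - g r) := by
        rw [integral_posPart_sub_eq_of_identDistrib hT hid, hposPart]
    _ = ∫ t in 0..r, g t := by
        rw [intervalIntegral.integral_sub (intervalIntegrable_of_integrableOn_Ioo
          (hid.integrable_snd hf) le_rfl hr0.le hrT.le) intervalIntegrable_const,
          intervalIntegral.integral_const, smul_eq_mul]
        ring

lemma mul_integral_posPart_sub_le_of_identDistrib (hf : Integrable f μ)
    (hid : IdentDistrib f g μ (volume.restrict (Ioo 0 T))) (hg : AntitoneOn g (Ioo 0 T))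
    {a b α : ℝ} (ha : 0 ≤ a) (hab : a < b) (hb : b ≤ T) (hα : ∫ t in a..b, (g t - α) = 0)
    (hE : MeasurableSet E) (hEavg : α * μ.real E ≤ ∫ x in E, f x ∂μ) :
    μ.real E * ∫ t in a..b, (g t - α)⁺ ≤ (b - a) * ∫ x, (f x - α)⁺ ∂μ := by
  have hT : 0 ≤ T := ha.trans (hab.le.trans hb)
  have hET : μ.real E ≤ T := measureReal_le_of_identDistrib hT hid
  have hgi : IntegrableOn g (Ioo 0 T) := hid.integrable_snd hf
  have hE_nonneg : 0 ≤ ∫ t in 0..μ.real E, (g t - α) := by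
    rw [intervalIntegral.integral_sub (intervalIntegrable_of_integrableOn_Ioo hgi le_rfl
      measureReal_nonneg hET) intervalIntegrable_const, intervalIntegral.integral_const, sub_zero,
      smul_eq_mul, mul_comm, sub_nonneg]
    exact hEavg.trans (setIntegral_le_integral_of_identDistrib hT hf hid hg hE)
  rw [integral_posPart_sub_eq_of_identDistrib hT hid]
  simpa only [sub_zero] using mul_integral_posPart_le_of_antitoneOn (h := fun t => g t - α)
    (hgi.sub (integrable_const α)) (fun _ hx _ hy hxy => sub_le_sub_right (hg hx hy hxy) α)
    ha hab hb hα measureReal_nonneg hET hE_nonneg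

lemma integral_posPart_sub_le_of_identDistrib (hf : Integrable f μ)
    (hid : IdentDistrib f g μ (volume.restrict (Ioo 0 T))) {a b c : ℝ} (ha : 0 ≤ a) (hab : a ≤ b)
    (hb : b ≤ T) : ∫ t in a..b, (g t - c)⁺ ≤ ∫ x, (f x - c)⁺ ∂μ := by
  have hT : 0 ≤ T := ha.trans (hab.trans hb)
  have hpos : IntegrableOn (fun t => (g t - c)⁺) (Ioo 0 T) :=
    ((hid.integrable_snd hf).sub (integrable_const c)).pos_part
  rw [integral_posPart_sub_eq_of_identDistrib hT hid]
  exact intervalIntegral.integral_mono_interval ha hab hb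
    (Eventually.of_forall fun t => posPart_nonneg _)
    (intervalIntegrable_of_integrableOn_Ioo hpos le_rfl hT le_rfl)

lemma meanOsc_Ioc_le_of_identDistrib (hf : Integrable f μ)
    (hid : IdentDistrib f g μ (volume.restrict (Ioo 0 T))) (hg : AntitoneOn g (Ioo 0 T))
    {a b K : ℝ} (ha : 0 ≤ a) (hab : a < b) (hb : b ≤ T) (hK : 0 ≤ K) (hE : MeasurableSet E)
    (hEavg : (⨍ t in Ioc a b, g t) * μ.real E ≤ ∫ x in E, f x ∂μ)
    (hEpos : ∫ x, (f x - ⨍ t in Ioc a b, g t)⁺ ∂μ ≤ K * μ.real E) :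
    meanOsc volume g (Ioc a b) ≤ 2 * K := by
  have hab' : 0 < b - a := sub_pos.2 hab
  have hvol : volume (Ioc a b) ≠ ⊤ := measure_Ioc_lt_top.ne
  have hgi : IntegrableOn g (Ioc a b) := (intervalIntegrable_of_integrableOn_Ioo
    (hid.integrable_snd hf) ha hab.le hb).1
  have hosc := meanOsc_mul_measureReal hvol hgi
  have hzero : ∫ t in Ioc a b, (g t - ⨍ u in Ioc a b, g u) = 0 := setAverage_sub_setAverage hvol g
  set α := ⨍ t in Ioc a b, g t
  rw [Real.volume_real_Ioc_of_le hab.le, ← intervalIntegral.integral_of_le hab.le] at hosc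
  rw [← intervalIntegral.integral_of_le hab.le] at hzero
  suffices hpos : ∫ t in a..b, (g t - α)⁺ ≤ K * (b - a) from
    le_of_mul_le_mul_right (by linarith) hab'
  rcases (measureReal_nonneg (μ := μ) (s := E)).eq_or_lt with hr | hr
  · rw [← hr, mul_zero] at hEpos
    exact ((integral_posPart_sub_le_of_identDistrib hf hid ha hab.le hb).trans hEpos).trans
      (by positivity)
  · refine le_of_mul_le_mul_left ?_ hr
    calc μ.real E * ∫ t in a..b, (g t - α)⁺
        ≤ (b - a) * ∫ x, (f x - α)⁺ ∂μ :=
          mul_integral_posPart_sub_le_of_identDistrib hf hid hg ha hab hb hzero hE hEavg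
      _ ≤ (b - a) * (K * μ.real E) := mul_le_mul_of_nonneg_left hEpos hab'.le
      _ = μ.real E * (K * (b - a)) := by ring

end Rearrangement

lemma exists_set_of_countable_disjoint_cover {X : Type*} [MeasurableSpace X] {μ : Measure X}
    [IsFiniteMeasure μ] {f : X → ℝ} (hf : Integrable f μ) {α K : ℝ} {𝒮 : Set (Set X)}
    (hcount : 𝒮.Countable) (hmeas : ∀ P ∈ 𝒮, MeasurableSet P) (hdisj : 𝒮.PairwiseDisjoint id)
    (hoff : ∀ᵐ x ∂μ, x ∉ ⋃₀ 𝒮 → f x ≤ α)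
    (hheavy : ∀ P ∈ 𝒮, ∃ C ⊆ P, MeasurableSet C ∧ α * μ.real C ≤ ∫ x in C, f x ∂μ ∧
      ∫ x in P, (f x - α)⁺ ∂μ ≤ K * μ.real C) :
    ∃ E, MeasurableSet E ∧ α * μ.real E ≤ ∫ x in E, f x ∂μ ∧
      ∫ x, (f x - α)⁺ ∂μ ≤ K * μ.real E := by
  have : Countable 𝒮 := hcount.to_subtype
  choose C hCP hCmeas hCavg hCpos using fun P : 𝒮 => hheavy P P.2
  have hPdisj : Pairwise (Function.onFun Disjoint ((↑) : 𝒮 → Set X)) :=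
    fun P P' hne => hdisj P.2 P'.2 (Subtype.coe_ne_coe.2 hne)
  have hCdisj : Pairwise (Function.onFun Disjoint C) :=
    fun P P' hne => (hPdisj hne).mono (hCP P) (hCP P')
  have hsumC : HasSum (fun P => μ.real (C P)) (μ.real (⋃ P, C P)) := by
    simpa using hasSum_integral_iUnion (f := fun _ => (1 : ℝ)) hCmeas hCdisj
      (integrable_const 1).integrableOn
  refine ⟨⋃ P, C P, MeasurableSet.iUnion hCmeas, ?_, ?_⟩
  · exact hasSum_le hCavg (hsumC.mul_left α)
      (hasSum_integral_iUnion hCmeas hCdisj hf.integrableOn)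
  · have hposPart : Integrable (fun x => (f x - α)⁺) μ := (hf.sub (integrable_const α)).pos_part
    rw [← setIntegral_eq_integral_of_ae_compl_eq_zero (s := ⋃₀ 𝒮)
      (hoff.mono fun x hx hxS => posPart_of_nonpos (sub_nonpos.2 (hx hxS))), sUnion_eq_iUnion]
    exact hasSum_le hCpos (hasSum_integral_iUnion (fun P => hmeas P P.2) hPdisj
      hposPart.integrableOn) (hsumC.mul_left K)

/-- A sequence of partitions of `X` into measurable cells, each refining the previous one, where
`index k x` labels the cell of generation `k` containing `x`. -/
structure NestedPartition (X ι : Type*) [MeasurableSpace X] where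
  index : ℕ → X → ι
  measurableSet_fiber : ∀ k i, MeasurableSet (index k ⁻¹' {i})
  index_eq_of_succ : ∀ {k x y}, index (k + 1) x = index (k + 1) y → index k x = index k y

namespace NestedPartition

variable {X ι : Type*} [MeasurableSpace X] (𝒟 : NestedPartition X ι) {μ : Measure X} {f : X → ℝ}
  {α : ℝ} {k l : ℕ} {x y : X}

/-- The cell of generation `k` containing `x`. -/
def cell (k : ℕ) (x : X) : Set X := 𝒟.index k ⁻¹' {𝒟.index k x}

lemma mem_cell_self : x ∈ 𝒟.cell k x := rfl

lemma measurableSet_cell : MeasurableSet (𝒟.cell k x) := 𝒟.measurableSet_fiber k _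

variable {𝒟}

lemma cell_eq_of_mem (hy : y ∈ 𝒟.cell k x) : 𝒟.cell k y = 𝒟.cell k x :=
  congrArg (fun i => 𝒟.index k ⁻¹' {i}) hy

lemma cell_subset_cell (hlk : l ≤ k) : 𝒟.cell k x ⊆ 𝒟.cell l x :=
  antitone_nat_of_succ_le (f := fun k => 𝒟.cell k x) (fun _ _ => 𝒟.index_eq_of_succ) hlk

variable (𝒟 μ f α) in
/-- Some cell of generation `k + 1` inside the cell of `x` of generation `k` has average `> α`. -/
def HasHeavyChild (k : ℕ) (x : X) : Prop :=
  ∃ y ∈ 𝒟.cell k x, α < ⨍ z in 𝒟.cell (k + 1) y, f z ∂μ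

variable (𝒟 μ f α) in
/-- `k` is the first generation at which the cell of `x` has a child with average `> α`. This is
one generation before the usual Calderón–Zygmund stopping time, so that the stopped cells
themselves still have average `≤ α`. -/
def IsStopping (k : ℕ) (x : X) : Prop :=
  𝒟.HasHeavyChild μ f α k x ∧ ∀ l < k, ¬𝒟.HasHeavyChild μ f α l x

variable (𝒟 μ f α) in
/-- The family of stopped cells. -/
def stoppingCells : Set (Set X) := {P | ∃ k x, 𝒟.IsStopping μ f α k x ∧ P = 𝒟.cell k x}

lemma isStopping_of_mem_cell (hx : 𝒟.IsStopping μ f α k x) (hy : y ∈ 𝒟.cell k x) :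
    𝒟.IsStopping μ f α k y := by
  have hcell {l : ℕ} (hlk : l ≤ k) : 𝒟.cell l y = 𝒟.cell l x :=
    cell_eq_of_mem (cell_subset_cell hlk hy)
  refine ⟨?_, fun l hlk => ?_⟩
  · rw [HasHeavyChild, hcell le_rfl]
    exact hx.1
  · rw [HasHeavyChild, hcell hlk.le]
    exact hx.2 l hlk

lemma IsStopping.eq (hk : 𝒟.IsStopping μ f α k x) (hl : 𝒟.IsStopping μ f α l x) : k = l :=
  le_antisymm (not_lt.1 fun h => hk.2 l h hl.1) (not_lt.1 fun h => hl.2 k h hk.1)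

lemma pairwiseDisjoint_stoppingCells : (𝒟.stoppingCells μ f α).PairwiseDisjoint id := by
  rintro _ ⟨k, x, hx, rfl⟩ _ ⟨l, y, hy, rfl⟩ hne
  refine disjoint_left.2 fun z hzx hzy => hne ?_
  obtain rfl := (isStopping_of_mem_cell hx hzx).eq (isStopping_of_mem_cell hy hzy)
  exact (cell_eq_of_mem hzx).symm.trans (cell_eq_of_mem hzy)

lemma countable_stoppingCells [Countable ι] : (𝒟.stoppingCells μ f α).Countable := by
  refine (countable_range fun p : ℕ × ι => 𝒟.index p.1 ⁻¹' {p.2}).mono ?_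
  rintro _ ⟨k, x, -, rfl⟩
  exact ⟨(k, 𝒟.index k x), rfl⟩

lemma setAverage_cell_le_of_isStopping (hroot : ∀ x, ⨍ y in 𝒟.cell 0 x, f y ∂μ ≤ α)
    (hx : 𝒟.IsStopping μ f α k x) : ⨍ y in 𝒟.cell k x, f y ∂μ ≤ α := by
  cases k with
  | zero => exact hroot x
  | succ k => exact not_lt.1 fun h => hx.2 k k.lt_succ_self ⟨x, 𝒟.mem_cell_self, h⟩

lemma le_of_notMem_sUnion_stoppingCells
    (hlim : Tendsto (fun k => ⨍ y in 𝒟.cell k x, f y ∂μ) atTop (𝓝 (f x)))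
    (hx : x ∉ ⋃₀ 𝒟.stoppingCells μ f α) : f x ≤ α := by
  classical
  have hlight (k : ℕ) : ¬𝒟.HasHeavyChild μ f α k x := by
    intro hk
    have hex : ∃ k, 𝒟.HasHeavyChild μ f α k x := ⟨k, hk⟩
    exact hx ⟨_, ⟨Nat.find hex, x, ⟨Nat.find_spec hex, fun _ => Nat.find_min hex⟩, rfl⟩,
      𝒟.mem_cell_self⟩
  exact le_of_tendsto' ((tendsto_add_atTop_iff_nat 1).2 hlim) fun k =>
    not_lt.1 fun h => hlight k ⟨x, 𝒟.mem_cell_self, h⟩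

lemma exists_heavy_subset_of_mem_stoppingCells [IsFiniteMeasure μ] {D : ℝ≥0} {M : ℝ}
    (hD : ∀ k x, μ (𝒟.cell k x) ≤ D * μ (𝒟.cell (k + 1) x)) (hf : Integrable f μ)
    (hM : ∀ k x, meanOsc μ f (𝒟.cell k x) ≤ M)
    (hroot : ∀ x, ⨍ y in 𝒟.cell 0 x, f y ∂μ ≤ α) {P : Set X} (hP : P ∈ 𝒟.stoppingCells μ f α) :
    ∃ C ⊆ P, MeasurableSet C ∧ α * μ.real C ≤ ∫ x in C, f x ∂μ ∧
      ∫ x in P, (f x - α)⁺ ∂μ ≤ D * M / 2 * μ.real C := by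
  obtain ⟨k, x, hx, rfl⟩ := hP
  obtain ⟨y, hy, hheavy⟩ := hx.1
  have hM0 : 0 ≤ M := meanOsc_nonneg.trans (hM k x)
  have hDreal : μ.real (𝒟.cell k y) ≤ D * μ.real (𝒟.cell (k + 1) y) := by
    simpa [measureReal_def] using
      ENNReal.toReal_mono (ENNReal.mul_ne_top (by simp) (measure_ne_top μ _)) (hD k y)
  refine ⟨𝒟.cell (k + 1) y, (cell_subset_cell k.le_succ).trans (cell_eq_of_mem hy).subset,
    𝒟.measurableSet_cell,
    mul_measureReal_le_setIntegral_of_le_setAverage (measure_ne_top μ _) hheavy.le, ?_⟩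
  calc ∫ z in 𝒟.cell k x, (f z - α)⁺ ∂μ
      ≤ meanOsc μ f (𝒟.cell k x) / 2 * μ.real (𝒟.cell k x) :=
        setIntegral_posPart_sub_le_of_setAverage_le (measure_ne_top μ _) hf.integrableOn
          (setAverage_cell_le_of_isStopping hroot hx)
    _ ≤ M / 2 * (D * μ.real (𝒟.cell (k + 1) y)) := by
        rw [← cell_eq_of_mem hy]
        gcongr
        exact hM k y
    _ = D * M / 2 * μ.real (𝒟.cell (k + 1) y) := by ring

lemma exists_calderonZygmund_set [Countable ι] [IsFiniteMeasure μ] {D : ℝ≥0} {M : ℝ}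
    (hD : ∀ k x, μ (𝒟.cell k x) ≤ D * μ (𝒟.cell (k + 1) x)) (hf : Integrable f μ)
    (hM : ∀ k x, meanOsc μ f (𝒟.cell k x) ≤ M) (hroot : ∀ x, ⨍ y in 𝒟.cell 0 x, f y ∂μ ≤ α)
    (hlim : ∀ᵐ x ∂μ, Tendsto (fun k => ⨍ y in 𝒟.cell k x, f y ∂μ) atTop (𝓝 (f x))) :
    ∃ E, MeasurableSet E ∧ α * μ.real E ≤ ∫ x in E, f x ∂μ ∧
      ∫ x, (f x - α)⁺ ∂μ ≤ D * M / 2 * μ.real E := by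
  refine exists_set_of_countable_disjoint_cover hf (countable_stoppingCells (𝒟 := 𝒟)) ?_
    pairwiseDisjoint_stoppingCells (hlim.mono fun x hx => le_of_notMem_sUnion_stoppingCells hx)
    fun P hP => exists_heavy_subset_of_mem_stoppingCells hD hf hM hroot hP
  rintro _ ⟨k, x, -, rfl⟩
  exact 𝒟.measurableSet_cell

end NestedPartition

section General

variable {X ι : Type*} [MeasurableSpace X] [Countable ι] {μ : Measure X}
  {𝒟 : NestedPartition X ι} {D : ℝ≥0} {f : X → ℝ} {M : ℝ} {g : ℝ → ℝ} {T a b : ℝ}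

lemma meanOsc_Ioc_le_of_average_le (hroot : ∀ x, 𝒟.cell 0 x = univ)
    (hD : ∀ k x, μ (𝒟.cell k x) ≤ D * μ (𝒟.cell (k + 1) x)) (hf : Integrable f μ)
    (hlim : ∀ᵐ x ∂μ, Tendsto (fun k => ⨍ y in 𝒟.cell k x, f y ∂μ) atTop (𝓝 (f x)))
    (hM : ∀ k x, meanOsc μ f (𝒟.cell k x) ≤ M)
    (hid : IdentDistrib f g μ (volume.restrict (Ioo 0 T))) (hg : AntitoneOn g (Ioo 0 T))
    (ha : 0 ≤ a) (hab : a < b) (hb : b ≤ T) (havg : ⨍ x, f x ∂μ ≤ ⨍ t in Ioc a b, g t) :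
    meanOsc volume g (Ioc a b) ≤ D * M := by
  have huniv : μ univ = ENNReal.ofReal T := measure_univ_eq_of_identDistrib hid
  have : IsFiniteMeasure μ := ⟨huniv ▸ ENNReal.ofReal_lt_top⟩
  obtain ⟨x, -⟩ : (univ : Set X).Nonempty := nonempty_of_measure_ne_zero <| by
    rw [huniv]
    exact (ENNReal.ofReal_pos.2 (ha.trans_lt (hab.trans_le hb))).ne'
  have hM0 : 0 ≤ M := meanOsc_nonneg.trans (hM 0 x)
  obtain ⟨E, hE, hEavg, hEpos⟩ := NestedPartition.exists_calderonZygmund_set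
    (α := ⨍ t in Ioc a b, g t) hD hf hM
    (fun x => by rwa [hroot, Measure.restrict_univ]) hlim
  have hosc := meanOsc_Ioc_le_of_identDistrib hf hid hg ha hab hb (by positivity) hE hEavg hEpos
  linarith

theorem dyadic_bmo_rearrangement_general (hroot : ∀ x, 𝒟.cell 0 x = univ)
    (hD : ∀ k x, μ (𝒟.cell k x) ≤ D * μ (𝒟.cell (k + 1) x)) (hf : Integrable f μ)
    (hlim : ∀ᵐ x ∂μ, Tendsto (fun k => ⨍ y in 𝒟.cell k x, f y ∂μ) atTop (𝓝 (f x)))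
    (hM : ∀ k x, meanOsc μ f (𝒟.cell k x) ≤ M)
    (hid : IdentDistrib f g μ (volume.restrict (Ioo 0 T))) (hg : AntitoneOn g (Ioo 0 T))
    (ha : 0 ≤ a) (hab : a < b) (hb : b ≤ T) : meanOsc volume g (Ioc a b) ≤ D * M := by
  rcases le_total (⨍ x, f x ∂μ) (⨍ t in Ioc a b, g t) with havg | havg
  · exact meanOsc_Ioc_le_of_average_le hroot hD hf hlim hM hid hg ha hab hb havg
  have havg_neg : ⨍ x, (-f) x ∂μ ≤ ⨍ t in Ioc (T - b) (T - a), -g (T - t) := by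
    simpa only [Pi.neg_apply, average_neg, setAverage_Ioc_comp_sub_left g T hab.le] using
      neg_le_neg havg
  have hlim_neg : ∀ᵐ x ∂μ,
      Tendsto (fun k => ⨍ y in 𝒟.cell k x, (-f) y ∂μ) atTop (𝓝 ((-f) x)) :=
    hlim.mono fun x hx => by simpa only [Pi.neg_apply, average_neg] using hx.neg
  calc meanOsc volume g (Ioc a b)
      = meanOsc volume (-fun t => g (T - t)) (Ioc (T - b) (T - a)) := by
        rw [meanOsc_neg, meanOsc_Ioc_comp_sub_left g T hab.le]
    _ ≤ D * M := meanOsc_Ioc_le_of_average_le hroot hD hf.neg hlim_neg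
        (fun k x => meanOsc_neg.trans_le (hM k x)) (identDistrib_neg_comp_sub_left hid)
        (antitoneOn_neg_comp_sub_left hg) (sub_nonneg.2 hb) (sub_lt_sub_left hab T)
        (sub_le_self T ha) havg_neg

end General

section Dyadic

variable {n k : ℕ} {m : Fin n → ℕ} {f : (Fin n → ℝ) → ℝ}

/-- The closed dyadic cube of side `2⁻ᵏ` with lower corner `2⁻ᵏ m`. -/
def dyadicCube (k : ℕ) (m : Fin n → ℕ) : Set (Fin n → ℝ) :=
  Icc (fun i => (m i : ℝ) / 2 ^ k) (fun i => ((m i : ℝ) + 1) / 2 ^ k)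

/-- The integer coordinates of a dyadic cube of side `2⁻ᵏ` containing `x`, for `x ∈ Q0 n`. They are
capped at `2ᵏ - 1` so that points on the upper faces of `Q0 n` are assigned to a subcube of `Q0 n`
and generation `0` consists of a single cell. -/
def dyadicIndex (k : ℕ) (x : Fin n → ℝ) : Fin n → ℕ := fun i => min ⌊x i * 2 ^ k⌋₊ (2 ^ k - 1)

lemma dyadicIndex_lt (k : ℕ) (x : Fin n → ℝ) (i : Fin n) : dyadicIndex k x i < 2 ^ k :=
  (min_le_right _ _).trans_lt (Nat.sub_one_lt (by positivity))

lemma dyadicIndex_succ_div_two (k : ℕ) (x : Fin n → ℝ) (i : Fin n) :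
    dyadicIndex (k + 1) x i / 2 = dyadicIndex k x i := by
  have hmono : Monotone fun j : ℕ => j / 2 := fun _ _ h => Nat.div_le_div_right h
  have hfloor : ⌊x i * 2 ^ (k + 1)⌋₊ / 2 = ⌊x i * 2 ^ k⌋₊ := by
    rw [← Nat.floor_div_ofNat, pow_succ, ← mul_assoc, mul_div_cancel_right₀ _ two_ne_zero]
  have hcap : (2 ^ (k + 1) - 1) / 2 = 2 ^ k - 1 := by omega
  simpa only [dyadicIndex, hfloor, hcap] using
    hmono.map_min (a := ⌊x i * 2 ^ (k + 1)⌋₊) (b := 2 ^ (k + 1) - 1)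

lemma measurable_dyadicIndex (k : ℕ) : Measurable (dyadicIndex k : (Fin n → ℝ) → Fin n → ℕ) :=
  measurable_pi_lambda _ fun i =>
    (((measurable_pi_apply i).mul_const _).nat_floor).min measurable_const

lemma dyadicIndex_eq_of_mem_Ico (hm : ∀ i, m i < 2 ^ k) {x : Fin n → ℝ}
    (hx : x ∈ univ.pi fun i => Ico ((m i : ℝ) / 2 ^ k) (((m i : ℝ) + 1) / 2 ^ k)) :
    dyadicIndex k x = m := by
  funext i
  obtain ⟨hlower, hupper⟩ := hx i (mem_univ i)
  rw [div_le_iff₀ (by positivity)] at hlower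
  rw [lt_div_iff₀ (by positivity)] at hupper
  have hfloor : ⌊x i * 2 ^ k⌋₊ = m i :=
    (Nat.floor_eq_iff ((m i).cast_nonneg.trans hlower)).2 ⟨hlower, hupper⟩
  rw [dyadicIndex, hfloor, min_eq_left (Nat.le_sub_one_of_lt (hm i))]

lemma mem_dyadicCube_dyadicIndex {x : Fin n → ℝ} (hx : x ∈ Q0 n) (k : ℕ) :
    x ∈ dyadicCube k (dyadicIndex k x) := by
  have hpow : (0 : ℝ) < 2 ^ k := by positivity
  refine ⟨fun i => (div_le_iff₀ hpow).2 ?_, fun i => (le_div_iff₀ hpow).2 ?_⟩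
  · calc ((dyadicIndex k x i : ℕ) : ℝ) ≤ ⌊x i * 2 ^ k⌋₊ := Nat.cast_le.2 (min_le_left _ _)
      _ ≤ x i * 2 ^ k := Nat.floor_le (mul_nonneg (hx.1 i) hpow.le)
  · rcases min_choice ⌊x i * 2 ^ k⌋₊ (2 ^ k - 1) with h | h <;> rw [dyadicIndex, h]
    · exact (Nat.lt_floor_add_one _).le
    · have hcast : ((2 ^ k - 1 : ℕ) : ℝ) + 1 = 2 ^ k := by
        rw [Nat.cast_sub Nat.one_le_two_pow]
        simp
      rw [hcast]
      exact mul_le_of_le_one_left hpow.le (hx.2 i)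

lemma isDyadic_dyadicCube (hm : ∀ i, m i < 2 ^ k) : IsDyadic n (dyadicCube k m) :=
  ⟨k, m, hm, rfl⟩

lemma dyadicCube_subset_Q0 (hm : ∀ i, m i < 2 ^ k) : dyadicCube k m ⊆ Q0 n := by
  refine Icc_subset_Icc (fun i => div_nonneg (m i).cast_nonneg (by positivity)) fun i => ?_
  rw [Pi.one_apply, div_le_one (by positivity)]
  exact_mod_cast hm i

lemma dyadicCube_eq_closedBall (k : ℕ) (m : Fin n → ℕ) :
    dyadicCube k m =
      Metric.closedBall (fun i => ((m i : ℝ) + 1 / 2) / 2 ^ k) (((2 : ℝ) ^ k)⁻¹ / 2) := by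
  rw [closedBall_pi _ (by positivity), dyadicCube, ← pi_univ_Icc]
  congr 1
  funext i
  rw [Real.closedBall_eq_Icc]
  congr 1 <;> ring

lemma volume_dyadicCube (k : ℕ) (m : Fin n → ℕ) :
    volume (dyadicCube k m) = ENNReal.ofReal (((2 : ℝ) ^ k)⁻¹ ^ n) := by
  have hside (i : Fin n) : ((m i : ℝ) + 1) / 2 ^ k - (m i : ℝ) / 2 ^ k = ((2 : ℝ) ^ k)⁻¹ := by ring
  rw [dyadicCube, Real.volume_Icc_pi, ENNReal.ofReal_pow (by positivity)]
  simp only [hside, Finset.prod_const, Finset.card_univ, Fintype.card_fin]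

/-- The partitions of `ℝⁿ` into the level sets of `dyadicIndex k`. On `Q0 n` the cells agree with
the closed dyadic cubes up to null sets. -/
def dyadicPartition (n : ℕ) : NestedPartition (Fin n → ℝ) (Fin n → ℕ) where
  index := dyadicIndex
  measurableSet_fiber k m := measurable_dyadicIndex k (measurableSet_singleton m)
  index_eq_of_succ {k x y} h := by
    funext i
    rw [← dyadicIndex_succ_div_two k x, ← dyadicIndex_succ_div_two k y, h]

lemma cell_zero_dyadicPartition (x : Fin n → ℝ) : (dyadicPartition n).cell 0 x = univ :=
  eq_univ_of_forall fun _ => funext fun i =>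
    (Nat.lt_one_iff.1 (dyadicIndex_lt 0 _ i)).trans (Nat.lt_one_iff.1 (dyadicIndex_lt 0 x i)).symm

lemma cell_inter_Q0_ae_eq_dyadicCube (k : ℕ) (x : Fin n → ℝ) :
    ((dyadicPartition n).cell k x ∩ Q0 n : Set (Fin n → ℝ)) =ᵐ[volume]
      dyadicCube k (dyadicIndex k x) := by
  have hsubset : (dyadicPartition n).cell k x ∩ Q0 n ⊆ dyadicCube k (dyadicIndex k x) := by
    rintro y ⟨hy, hyQ⟩
    have hindex : dyadicIndex k y = dyadicIndex k x := hy
    exact hindex ▸ mem_dyadicCube_dyadicIndex hyQ k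
  refine hsubset.eventuallyLE.antisymm
    (Measure.univ_pi_Ico_ae_eq_Icc.symm.le.trans (LE.le.eventuallyLE fun y hy => ?_))
  exact ⟨dyadicIndex_eq_of_mem_Ico (dyadicIndex_lt k x) hy, dyadicCube_subset_Q0
    (dyadicIndex_lt k x) ⟨fun i => (hy i trivial).1, fun i => (hy i trivial).2.le⟩⟩

lemma restrict_Q0_restrict_cell (k : ℕ) (x : Fin n → ℝ) :
    (volume.restrict (Q0 n)).restrict ((dyadicPartition n).cell k x) =
      volume.restrict (dyadicCube k (dyadicIndex k x)) := by
  rw [Measure.restrict_restrict (dyadicPartition n).measurableSet_cell,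
    Measure.restrict_congr_set (cell_inter_Q0_ae_eq_dyadicCube k x)]

lemma restrict_Q0_cell (k : ℕ) (x : Fin n → ℝ) :
    volume.restrict (Q0 n) ((dyadicPartition n).cell k x) =
      ENNReal.ofReal (((2 : ℝ) ^ k)⁻¹ ^ n) := by
  rw [← Measure.restrict_apply_univ, restrict_Q0_restrict_cell, Measure.restrict_apply_univ,
    volume_dyadicCube]

lemma restrict_Q0_cell_le_mul_cell_succ (k : ℕ) (x : Fin n → ℝ) :
    volume.restrict (Q0 n) ((dyadicPartition n).cell k x) ≤
      (2 ^ n : ℝ≥0) * volume.restrict (Q0 n) ((dyadicPartition n).cell (k + 1) x) := by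
  rw [restrict_Q0_cell, restrict_Q0_cell, ← ENNReal.ofReal_coe_nnreal,
    ← ENNReal.ofReal_mul (by positivity)]
  refine ENNReal.ofReal_le_ofReal (le_of_eq ?_)
  push_cast
  rw [← mul_pow, pow_succ, mul_inv, mul_comm, inv_mul_cancel_right₀ two_ne_zero]

lemma meanOsc_cell_le {M : ℝ} (hM : ∀ Q, IsDyadic n Q → oscOn f Q ≤ M) (k : ℕ)
    (x : Fin n → ℝ) : meanOsc (volume.restrict (Q0 n)) f ((dyadicPartition n).cell k x) ≤ M := by
  rw [meanOsc, restrict_Q0_restrict_cell]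
  exact (oscOn_eq_meanOsc f _).symm.trans_le (hM _ (isDyadic_dyadicCube (dyadicIndex_lt k x)))

lemma ae_tendsto_setAverage_cell (hf : IntegrableOn f (Q0 n)) :
    ∀ᵐ x ∂volume.restrict (Q0 n), Tendsto
      (fun k => ⨍ y in (dyadicPartition n).cell k x, f y ∂volume.restrict (Q0 n)) atTop
      (𝓝 (f x)) := by
  have hQ0 : MeasurableSet (Q0 n) := measurableSet_Icc
  have hradius : Tendsto (fun k : ℕ => ((2 : ℝ) ^ k)⁻¹ / 2) atTop (𝓝[>] 0) := by
    refine tendsto_nhdsWithin_iff.2 ⟨?_, Eventually.of_forall fun k => by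
      rw [mem_Ioi]; positivity⟩
    simpa using (tendsto_inv_atTop_zero.comp
      (tendsto_pow_atTop_atTop_of_one_lt one_lt_two)).div_const (2 : ℝ)
  filter_upwards [ae_restrict_mem hQ0, ae_restrict_of_ae
    (IsUnifLocDoublingMeasure.ae_tendsto_average (μ := volume)
      (hf.integrable_indicator hQ0).locallyIntegrable 1)] with x hx hlim
  have hlim_cube := hlim (fun k i => ((dyadicIndex k x i : ℝ) + 1 / 2) / 2 ^ k) _ hradius <|
    Eventually.of_forall fun k => by
      rw [one_mul, ← dyadicCube_eq_closedBall]
      exact mem_dyadicCube_dyadicIndex hx k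
  rw [indicator_of_mem hx] at hlim_cube
  refine hlim_cube.congr fun k => ?_
  rw [restrict_Q0_restrict_cell, ← dyadicCube_eq_closedBall]
  exact setAverage_congr_fun measurableSet_Icc (Eventually.of_forall fun y hy =>
    indicator_of_mem (dyadicCube_subset_Q0 (dyadicIndex_lt k x) hy) f)

end Dyadic

lemma identDistrib_of_measure_lt_eq {X Y : Type*} [MeasurableSpace X] [MeasurableSpace Y]
    {μ : Measure X} {ν : Measure Y} [IsProbabilityMeasure μ] [IsProbabilityMeasure ν]
    {f : X → ℝ} {g : Y → ℝ} (hf : AEMeasurable f μ) (hg : AEMeasurable g ν)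
    (h : ∀ c, μ {x | c < f x} = ν {y | c < g y}) : IdentDistrib f g μ ν := by
  have := Measure.isProbabilityMeasure_map hf
  have := Measure.isProbabilityMeasure_map hg
  refine ⟨hf, hg, Measure.ext_of_Iic _ _ fun c => ?_⟩
  have hIoi : μ.map f (Ioi c) = ν.map g (Ioi c) := by
    rw [Measure.map_apply_of_aemeasurable hf measurableSet_Ioi,
      Measure.map_apply_of_aemeasurable hg measurableSet_Ioi]
    exact h c
  rw [← compl_Ioi, prob_compl_eq_one_sub measurableSet_Ioi, hIoi,
    prob_compl_eq_one_sub measurableSet_Ioi]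

lemma identDistrib_of_isRearrangement {n : ℕ} {f : (Fin n → ℝ) → ℝ} {g : ℝ → ℝ}
    (hf : AEMeasurable f (volume.restrict (Q0 n))) (hg : IsRearrangement f g) :
    IdentDistrib f g (volume.restrict (Q0 n)) (volume.restrict (Ioo 0 1)) := by
  have : IsProbabilityMeasure (volume.restrict (Q0 n)) := ⟨by simp [Q0, Real.volume_Icc_pi]⟩
  have : IsProbabilityMeasure (volume.restrict (Ioc (0 : ℝ) 1)) := ⟨by simp⟩
  rw [Measure.restrict_congr_set Ioo_ae_eq_Ioc]
  refine identDistrib_of_measure_lt_eq hf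
    (aemeasurable_restrict_of_antitoneOn measurableSet_Ioc hg.1) fun c => ?_
  rw [Q0, Measure.restrict_apply' measurableSet_Icc, Measure.restrict_apply' measurableSet_Ioc,
    inter_comm, inter_comm _ (Ioc (0 : ℝ) 1)]
  exact (hg.2.2 c).symm

/-- **Theorem 1.** If `f ∈ BMO_𝒟([0,1]ⁿ)` with `‖f‖_{*,𝒟} ≤ M`, then its nonincreasing
rearrangement `f_d` lies in `BMO((0,1])` with `‖f_d‖_* ≤ 2ⁿ M`: for every subinterval
`J = (a,b] ⊆ (0,1]` of positive length, `(1/|J|) ∫_J |f_d - (f_d)_J| ≤ 2ⁿ M`. -/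
theorem dyadic_bmo_rearrangement (n : ℕ) (hn : 1 ≤ n)
    (f : (Fin n → ℝ) → ℝ) (hf : IntegrableOn f (Q0 n))
    (M : ℝ) (hM : ∀ Q, IsDyadic n Q → oscOn f Q ≤ M)
    (fd : ℝ → ℝ) (hfd : IsRearrangement f fd)
    (a b : ℝ) (ha : 0 ≤ a) (hab : a < b) (hb : b ≤ 1) :
    oscI fd (Set.Ioc a b) ≤ 2 ^ n * M := by
  rw [oscI_eq_meanOsc]
  simpa using dyadic_bmo_rearrangement_general cell_zero_dyadicPartition
    restrict_Q0_cell_le_mul_cell_succ hf (ae_tendsto_setAverage_cell hf) (meanOsc_cell_le hM)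
    (identDistrib_of_isRearrangement hf.aemeasurable hfd) (hfd.1.mono Ioo_subset_Ioc_self)
    ha hab hb
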